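/- arXiv:2501.05024 — 2 statements merged into one kernel-verified Lean document; each statement's English description precedes it below -/
import Mathlib

section
/- The number of labeled split graphs with vertex set [n] = {1, …, n} that are not balanced is at most 2^n · 2^{2n²/9}. -/
/-!
A split graph with split partition `(C, Cᶜ)` is determined by its edges between `C` and `Cᶜ`, so
for each fixed `C` there are at most `2 ^ (|C| * |Cᶜ|)` such graphs
(`ncard_isSplitPartition_le`). An unbalanced split graph has a split partition one of whose parts
has fewer than `n / 3` vertices, and then `|C| * |Cᶜ| ≤ 2 * n ^ 2 / 9`
(`mul_le_of_lt_third`). A union bound over the at most `2 ^ n` choices of `C` gives the claim.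
-/

/-- `(C, I)` is a split partition of `G`: the vertex set is partitioned into a
clique `C` and an independent set `I`. -/
def IsSplitPartition {V : Type*} (G : SimpleGraph V) (C I : Set V) : Prop :=
  C ∪ I = Set.univ ∧ C ∩ I = ∅ ∧ G.IsClique C ∧ ∀ u ∈ I, ∀ v ∈ I, ¬ G.Adj u v

/-- A split graph is a graph admitting a split partition. -/
def IsSplit {V : Type*} (G : SimpleGraph V) : Prop :=
  ∃ C I : Set V, IsSplitPartition G C I

/-- An `n`-vertex split graph is balanced if `|C| ≥ n/3` and `|I| ≥ n/3` for every
split partition `(C, I)`. -/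
def IsBalanced (n : ℕ) (G : SimpleGraph (Fin n)) : Prop :=
  ∀ C I : Set (Fin n), IsSplitPartition G C I →
    (n : ℝ) / 3 ≤ C.ncard ∧ (n : ℝ) / 3 ≤ I.ncard

/-- A graph with split partition `(C, Cᶜ)` is encoded injectively by the set of its edges
between `C` and `Cᶜ`, a subset of `C × Cᶜ`. -/
lemma ncard_isSplitPartition_le {n : ℕ} (C : Set (Fin n)) :
    {G : SimpleGraph (Fin n) | IsSplitPartition G C Cᶜ}.ncard ≤ 2 ^ (C.ncard * Cᶜ.ncard) := by
  classical
  let f : SimpleGraph (Fin n) → Set (C × (Cᶜ : Set (Fin n))) :=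
    fun G => {p | G.Adj p.1 p.2}
  have hinj : Set.InjOn f {G : SimpleGraph (Fin n) | IsSplitPartition G C Cᶜ} := by
    rintro G ⟨-, -, hGC, hGI⟩ H ⟨-, -, hHC, hHI⟩ hf
    have key : ∀ u ∈ C, ∀ v ∈ Cᶜ, (G.Adj u v ↔ H.Adj u v) := fun u hu v hv =>
      Set.ext_iff.1 hf (⟨u, hu⟩, ⟨v, hv⟩)
    ext u v
    by_cases hu : u ∈ C <;> by_cases hv : v ∈ C
    · exact ⟨fun h => hHC hu hv h.ne, fun h => hGC hu hv h.ne⟩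
    · exact key u hu v hv
    · rw [G.adj_comm, H.adj_comm]
      exact key v hv u hu
    · exact ⟨fun h => (hGI u hu v hv h).elim, fun h => (hHI u hu v hv h).elim⟩
  rw [← hinj.ncard_image]
  refine (Set.ncard_le_card _).trans (le_of_eq ?_)
  rw [Nat.card_eq_fintype_card, Fintype.card_set, Fintype.card_prod, ← Nat.card_eq_fintype_card,
    ← Nat.card_eq_fintype_card, Nat.card_coe_set_eq, Nat.card_coe_set_eq]

/-- If `a + b = m` and one of `a`, `b` is below `m / 3`, then `a * b` is at most
`(m / 3) * (2 * m / 3)`. -/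
lemma mul_le_of_lt_third {a b m : ℝ} (h : a + b = m) (ha : 0 ≤ a) (hb : 0 ≤ b)
    (hlt : a < m / 3 ∨ b < m / 3) : a * b ≤ 2 * m ^ 2 / 9 := by
  subst h
  -- The difference of the two sides is `(2 * a - b) * (a - 2 * b) / 9`.
  rcases hlt with hlt | hlt
  · nlinarith [mul_nonneg (show 0 ≤ b - 2 * a by linarith) (show 0 ≤ 2 * b - a by linarith)]
  · nlinarith [mul_nonneg (show 0 ≤ 2 * a - b by linarith) (show 0 ≤ a - 2 * b by linarith)]

/-- The number of labeled split graphs on `[n]` that are not balanced is at most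
`2 ^ n * 2 ^ (2 n² / 9)`. -/
theorem count_unbalanced_split_graphs (n : ℕ) :
    (({G : SimpleGraph (Fin n) | IsSplit G ∧ ¬ IsBalanced n G}.ncard : ℝ))
      ≤ 2 ^ n * (2 : ℝ) ^ ((2 * (n : ℝ) ^ 2) / 9) := by
  classical
  let bad : Finset (Set (Fin n)) :=
    Finset.univ.filter fun C => (C.ncard : ℝ) < n / 3 ∨ (Cᶜ.ncard : ℝ) < n / 3
  have hsub : {G : SimpleGraph (Fin n) | IsSplit G ∧ ¬ IsBalanced n G} ⊆
      ⋃ C ∈ bad, {G : SimpleGraph (Fin n) | IsSplitPartition G C Cᶜ} := by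
    rintro G ⟨-, hG⟩
    simp only [IsBalanced, not_forall] at hG
    obtain ⟨C, I, hCI, hlt⟩ := hG
    obtain rfl : I = Cᶜ := (IsCompl.of_eq hCI.2.1 hCI.1).compl_eq.symm
    rw [not_and_or, not_le, not_le] at hlt
    simp only [Set.mem_iUnion]
    exact ⟨C, by simpa [bad] using hlt, hCI⟩
  have hterm : ∀ C ∈ bad, ({G : SimpleGraph (Fin n) | IsSplitPartition G C Cᶜ}.ncard : ℝ)
      ≤ (2 : ℝ) ^ ((2 * (n : ℝ) ^ 2) / 9) := by
    intro C hC
    have hsum : (C.ncard : ℝ) + Cᶜ.ncard = n := by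
      have := Set.ncard_add_ncard_compl C
      rw [Nat.card_eq_fintype_card, Fintype.card_fin] at this
      exact_mod_cast this
    calc ({G : SimpleGraph (Fin n) | IsSplitPartition G C Cᶜ}.ncard : ℝ)
        ≤ 2 ^ (C.ncard * Cᶜ.ncard) := by exact_mod_cast ncard_isSplitPartition_le C
      _ = (2 : ℝ) ^ ((C.ncard : ℝ) * Cᶜ.ncard) := by
        rw [← Real.rpow_natCast, Nat.cast_mul]
      _ ≤ _ := Real.rpow_le_rpow_of_exponent_le one_le_two <|
        mul_le_of_lt_third hsum (Nat.cast_nonneg _) (Nat.cast_nonneg _) (Finset.mem_filter.1 hC).2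
  have hbad : (bad.card : ℝ) ≤ 2 ^ n := by
    have : bad.card ≤ 2 ^ n := by
      simpa using Finset.card_le_univ bad
    exact_mod_cast this
  calc ({G : SimpleGraph (Fin n) | IsSplit G ∧ ¬ IsBalanced n G}.ncard : ℝ)
      ≤ ∑ C ∈ bad, ({G : SimpleGraph (Fin n) | IsSplitPartition G C Cᶜ}.ncard : ℝ) := by
        exact_mod_cast (Set.ncard_le_ncard hsub (Set.toFinite _)).trans
          (Finset.set_ncard_biUnion_le _ _)
    _ ≤ bad.card * (2 : ℝ) ^ ((2 * (n : ℝ) ^ 2) / 9) := by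
        simpa using Finset.sum_le_sum hterm
    _ ≤ _ := mul_le_mul_of_nonneg_right hbad (by positivity)
end

section
/- Let n ∈ ℕ, let π be a permutation of [n], let μ = |M_π| be the number of moved points of π, and suppose n − μ/5 < ω ≤ n. The number of labeled chordal graphs G with vertex set [n] = {1, …, n} and maximum clique size exactly ω such that 1, 2, …, n−ω is a truncated PEO of G is at most n^n · 2^{n²/4 − n²/100}. -/
/-!
Put `k = n - ω`. Since `π` moves at most `n` points, `k < n / 5`. A counted graph is complete on the
`ω` vertices `k, …, n - 1`, so it is determined by its adjacencies between the first `k` vertices and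
all `n` vertices: at most `2 ^ (k * n)` graphs qualify. As `k * n ≤ n² / 5 ≤ n² / 4 - n² / 100`, this
crude count is already small enough, and the factor `n ^ n ≥ 1` only helps. Chordality and the
elimination-ordering condition play no role.
-/

/-- A graph is chordal if it contains no induced cycle of length at least 4. -/
def IsChordal {V : Type*} (G : SimpleGraph V) : Prop :=
  ∀ m : ℕ, 4 ≤ m → ∀ f : ZMod m → V,
    ¬ (Function.Injective f ∧
       ∀ i j : ZMod m, G.Adj (f i) (f j) ↔ (j = i + 1 ∨ i = j + 1))

/-- `v` is simplicial in the subgraph of `G` induced on `S`: its neighborhood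
within `S` is a clique. -/
def SimplicialIn {V : Type*} (G : SimpleGraph V) (S : Set V) (v : V) : Prop :=
  ∀ u ∈ S, ∀ w ∈ S, G.Adj v u → G.Adj v w → u ≠ w → G.Adj u w

/-- The maximum clique size of `G` is exactly `ω`. -/
def CliqueNumberEq {V : Type*} (G : SimpleGraph V) (ω : ℕ) : Prop :=
  (∃ s : Set V, G.IsClique s ∧ s.ncard = ω) ∧
  ∀ s : Set V, G.IsClique s → s.ncard ≤ ω

/-- The ordering `e 0, e 1, …, e (n-1)` is a perfect elimination ordering of `G`:
each vertex `e i` is simplicial in the subgraph induced on `{e i, …, e (n-1)}`. -/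
def IsPEO {n : ℕ} (G : SimpleGraph (Fin n)) (e : Equiv.Perm (Fin n)) : Prop :=
  ∀ i : Fin n, SimplicialIn G {v : Fin n | ∃ j : Fin n, i ≤ j ∧ e j = v} (e i)

/-- The ordering `1, 2, …, n-ω` (i.e. the first `n-ω` vertices of `Fin n` in their
natural order) is a truncated PEO of `G`: the remaining vertices form a clique of
size `ω`, and this initial ordering extends to a perfect elimination ordering of `G`. -/
def NatTruncPEO (n ω : ℕ) (G : SimpleGraph (Fin n)) : Prop :=
  G.IsClique {v : Fin n | n - ω ≤ (v : ℕ)} ∧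
  {v : Fin n | n - ω ≤ (v : ℕ)}.ncard = ω ∧
  ∃ e : Equiv.Perm (Fin n), (∀ i : Fin n, (i : ℕ) < n - ω → e i = i) ∧ IsPEO G e

/-- `π` is an automorphism of the labeled graph `G`. -/
def IsAutomorphism {n : ℕ} (π : Equiv.Perm (Fin n)) (G : SimpleGraph (Fin n)) : Prop :=
  ∀ u v : Fin n, G.Adj (π u) (π v) ↔ G.Adj u v

/-- A graph on `Fin n` that is complete on `{k, …, n - 1}` is determined by the neighborhoods of its
first `k` vertices, so there are at most `2 ^ (k * n)` of them. -/
theorem ncard_isClique_tail_le {n k : ℕ} (hk : k ≤ n) :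
    {G : SimpleGraph (Fin n) | G.IsClique {v : Fin n | k ≤ (v : ℕ)}}.ncard ≤ 2 ^ (k * n) := by
  classical
  let f : SimpleGraph (Fin n) → Set (Fin k × Fin n) :=
    fun G => {p | G.Adj (Fin.castLE hk p.1) p.2}
  have key : ∀ (G H : SimpleGraph (Fin n)), f G = f H → ∀ u v : Fin n, (u : ℕ) < k →
      (G.Adj u v ↔ H.Adj u v) := fun G H h u v hu =>
    Set.ext_iff.mp h (⟨u, hu⟩, v)
  have h := Set.ncard_le_ncard_of_injOn (t := (Set.univ : Set (Set (Fin k × Fin n)))) f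
    (s := {G : SimpleGraph (Fin n) | G.IsClique {v : Fin n | k ≤ (v : ℕ)}})
    (fun _ _ => Set.mem_univ _) (by
      intro G hG H hH hGH
      ext u v
      by_cases hu : (u : ℕ) < k
      · exact key G H hGH u v hu
      by_cases hv : (v : ℕ) < k
      · rw [G.adj_comm, H.adj_comm]
        exact key G H hGH v u hv
      · by_cases huv : u = v
        · simp [huv]
        · exact iff_of_true (hG (not_lt.mp hu) (not_lt.mp hv) huv)
            (hH (not_lt.mp hu) (not_lt.mp hv) huv))
  simpa [Set.ncard_univ, Nat.card_eq_fintype_card, Fintype.card_set] using h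

/-- Let `π` be a permutation of `[n]` with `μ` moved points, and suppose
`n - μ/5 < ω ≤ n`. The number of labeled chordal graphs on `[n]` with maximum clique
size exactly `ω` for which `1, 2, …, n-ω` is a truncated PEO is at most
`n ^ n * 2 ^ (n²/4 - n²/100)`. -/
theorem count_truncPEO_large_omega_mu (n ω : ℕ) (π : Equiv.Perm (Fin n))
    (hω₁ : (n : ℝ) - (π.support.card : ℝ) / 5 < (ω : ℝ)) (hω₂ : ω ≤ n) :
    (({G : SimpleGraph (Fin n) |
        IsChordal G ∧ CliqueNumberEq G ω ∧ NatTruncPEO n ω G}.ncard : ℝ))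
      ≤ (n : ℝ) ^ n * (2 : ℝ) ^ ((n : ℝ) ^ 2 / 4 - (n : ℝ) ^ 2 / 100) := by
  have hμ : (π.support.card : ℝ) ≤ n := by
    exact_mod_cast (Finset.card_le_univ π.support).trans_eq (Fintype.card_fin n)
  have hk : ((n - ω : ℕ) : ℝ) ≤ n / 5 := by
    rw [Nat.cast_sub hω₂]
    linarith
  have hcount : {G : SimpleGraph (Fin n) |
      IsChordal G ∧ CliqueNumberEq G ω ∧ NatTruncPEO n ω G}.ncard ≤ 2 ^ ((n - ω) * n) :=
    (Set.ncard_le_ncard (fun G hG => hG.2.2.1) (Set.toFinite _)).trans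
      (ncard_isClique_tail_le (Nat.sub_le n ω))
  -- With the convention `0 ^ 0 = 1` this also covers `n = 0`.
  have hn : (1 : ℝ) ≤ (n : ℝ) ^ n := by
    rcases Nat.eq_zero_or_pos n with rfl | hpos
    · simp
    · exact one_le_pow₀ (by exact_mod_cast hpos)
  have hexp : (((n - ω) * n : ℕ) : ℝ) ≤ (n : ℝ) ^ 2 / 4 - (n : ℝ) ^ 2 / 100 := by
    rw [Nat.cast_mul]
    nlinarith [mul_le_mul_of_nonneg_right hk (Nat.cast_nonneg (α := ℝ) n), sq_nonneg (n : ℝ)]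
  calc _ ≤ (2 : ℝ) ^ ((n - ω) * n) := by exact_mod_cast hcount
    _ = (2 : ℝ) ^ (((n - ω) * n : ℕ) : ℝ) := (Real.rpow_natCast _ _).symm
    _ ≤ (2 : ℝ) ^ ((n : ℝ) ^ 2 / 4 - (n : ℝ) ^ 2 / 100) :=
      Real.rpow_le_rpow_of_exponent_le one_le_two hexp
    _ ≤ _ := le_mul_of_one_le_left (by positivity) hn
end
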